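/- arXiv:1501.07379 — 2 statements merged into one kernel-verified Lean document; each statement's English description precedes it below -/
import Mathlib

section
/- Let α and β be positive integers with β > 4. Let a₁, a₂, …, a_β be a sequence of β integers which sums to α·β and satisfies aᵢ ≤ 2·α for every i. If for every i the inequality aᵢ·(α·β − aᵢ) ≤ α·(α·β − α) holds, then aᵢ = α for every i. -/
/-!
Since `y * (s - y) - x * (s - x) = (y - x) * (s - (x + y))`, the bandwidths of `x` and `y` compare
as `x` and `y` do whenever `x + y < s`. A term with `α < a i ≤ 2 * α` would satisfy
`a i + α ≤ 3 * α < α * β`, so the bandwidth bound rules it out. Every term is therefore at most the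
average `α`, which forces equality throughout.
-/

section OrderedRing

variable {R : Type*} [CommRing R] [LinearOrder R] [IsStrictOrderedRing R]

theorem mul_sub_le_mul_sub_iff_of_add_lt {s x y : R} (h : x + y < s) :
    x * (s - x) ≤ y * (s - y) ↔ x ≤ y := by
  have hpos : 0 < s - (x + y) := sub_pos.mpr h
  have hfactor : y * (s - y) - x * (s - x) = (y - x) * (s - (x + y)) := by ring
  rw [← sub_nonneg, hfactor, mul_nonneg_iff_of_pos_right hpos, sub_nonneg]

theorem le_of_mul_sub_le_mul_sub_of_le_two_mul {n α x : R} (hn : 3 < n)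
    (hub : x ≤ 2 * α) (hbw : x * (α * n - x) ≤ α * (α * n - α)) : x ≤ α := by
  by_contra! hlt
  have hα : 0 < α := by linarith
  have hadd : x + α < α * n := calc
    x + α ≤ α * 3 := by linarith
    _ < α * n := by gcongr
  exact hlt.not_ge ((mul_sub_le_mul_sub_iff_of_add_lt hadd).mp hbw)

end OrderedRing

theorem eq_of_le_of_sum_eq_card_nsmul {ι M : Type*} [Fintype ι] [AddCommMonoid M]
    [PartialOrder M] [IsOrderedCancelAddMonoid M] {a : ι → M} {c : M} (hle : ∀ i, a i ≤ c)
    (hsum : ∑ i, a i = Fintype.card ι • c) (i : ι) : a i = c := by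
  have hconst : ∑ i, a i = ∑ _i : ι, c := by rw [hsum, Finset.sum_const, Finset.card_univ]
  exact (Finset.sum_eq_sum_iff_of_le fun i _ ↦ hle i).mp hconst i (Finset.mem_univ i)

theorem bandwidth_lemma_general {ι R : Type*} [Fintype ι] [CommRing R] [LinearOrder R]
    [IsStrictOrderedRing R] (hι : 3 < Fintype.card ι) {α : R} {a : ι → R}
    (hsum : ∑ i, a i = α * Fintype.card ι) (hub : ∀ i, a i ≤ 2 * α)
    (hbw : ∀ i, a i * (α * Fintype.card ι - a i) ≤ α * (α * Fintype.card ι - α)) (i : ι) :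
    a i = α := by
  have hle (i : ι) : a i ≤ α :=
    le_of_mul_sub_le_mul_sub_of_le_two_mul (by exact_mod_cast hι) (hub i) (hbw i)
  exact eq_of_le_of_sum_eq_card_nsmul hle (by rw [hsum, nsmul_eq_mul']) i

/-- Bandwidth Lemma: if β > 4 integers summing to α·β each satisfy
    aᵢ ≤ 2·α and aᵢ·(α·β − aᵢ) ≤ α·(α·β − α), then every aᵢ = α. -/
theorem bandwidth_lemma (α β : ℕ) (hα : 0 < α) (hβ : 4 < β)
    (a : Fin β → ℤ)
    (hsum : ∑ i, a i = (α : ℤ) * β)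
    (hub : ∀ i, a i ≤ 2 * (α : ℤ))
    (hbw : ∀ i, a i * ((α : ℤ) * β - a i) ≤ (α : ℤ) * ((α : ℤ) * β - α)) :
    ∀ i, a i = (α : ℤ) :=
  bandwidth_lemma_general (by rw [Fintype.card_fin]; lia) (by rwa [Fintype.card_fin]) hub
    (by rwa [Fintype.card_fin])
end

section
/- Let α and β be positive integers with β > 4. Let a₁, …, a_α and b₁, …, b_β be two sequences of integers whose combined sum is α·β + 2·α, with aᵢ ≤ 3 for every i ≤ α and bᵢ ≤ 2·α for every i ≤ β. If for every i ≤ β the inequality bᵢ·(α·β + 2·α − bᵢ) ≤ α·(α·β + α) holds, and for every i ≤ α the inequality aᵢ·(α·β + 2·α − aᵢ) ≤ 2·(α·β + 2·α − 2) holds, then bᵢ = α for every i ≤ β and aᵢ = 2 for every i ≤ α. -/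
/-!
If `x + c < N`, the bandwidth inequality `x * (N - x) ≤ c * (N - c)`, which factors as
`(x - c) * (N - (x + c)) ≤ 0`, forces `x ≤ c`. So every gadget holds at most its intended number
of nodes, and since these numbers add up to the total, every bound is attained.
-/

section LinearOrderedRing

variable {R : Type*} [CommRing R] [LinearOrder R] [IsStrictOrderedRing R]

theorem le_of_mul_sub_le_mul_sub {x c N : R} (hxc : x + c < N)
    (h : x * (N - x) ≤ c * (N - c)) : x ≤ c := by
  have factored : (x - c) * (N - (x + c)) ≤ 0 := by linear_combination h
  exact sub_nonpos.1 (nonpos_of_mul_nonpos_left factored (sub_pos.2 hxc))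

theorem eq_of_forall_mul_sub_le_mul_sub {ι : Type*} [Fintype ι] {x c : ι → R} {N : R}
    (hsum : ∑ i, x i = ∑ i, c i) (hxc : ∀ i, x i + c i < N)
    (h : ∀ i, x i * (N - x i) ≤ c i * (N - c i)) : x = c := by
  have hle : ∀ i ∈ Finset.univ, x i ≤ c i := fun i _ => le_of_mul_sub_le_mul_sub (hxc i) (h i)
  exact funext fun i => (Finset.sum_eq_sum_iff_of_le hle).1 hsum i (Finset.mem_univ i)

theorem extended_bandwidth_lemma_general {α β : ℕ} (hβ : 1 < β) (hN : 5 < α * β + 2 * α)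
    {a : Fin α → R} {b : Fin β → R}
    (hsum : (∑ i, a i) + (∑ i, b i) = (α : R) * β + 2 * α)
    (ha : ∀ i, a i ≤ 3)
    (hb : ∀ i, b i ≤ 2 * (α : R))
    (hbw_b : ∀ i, b i * ((α : R) * β + 2 * α - b i) ≤ (α : R) * ((α : R) * β + α))
    (hbw_a : ∀ i, a i * ((α : R) * β + 2 * α - a i) ≤ 2 * ((α : R) * β + 2 * α - 2)) :
    (∀ i, b i = (α : R)) ∧ (∀ i, a i = 2) := by
  have hNR : (5 : R) < α * β + 2 * α := by exact_mod_cast hN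
  have hα : 0 < α := Nat.pos_of_ne_zero (by rintro rfl; simp at hN)
  have hαβ : (α : R) < α * β := by exact_mod_cast lt_mul_of_one_lt_right hα hβ
  have key : Sum.elim a b = Sum.elim (fun _ => 2) (fun _ => (α : R)) := by
    refine eq_of_forall_mul_sub_le_mul_sub (N := (α : R) * β + 2 * α) ?_ ?_ ?_
    · simp only [Fintype.sum_sum_type, Sum.elim_inl, Sum.elim_inr, hsum, Fin.sum_const,
        nsmul_eq_mul]
      ring
    · rintro (i | i)
      · exact (add_le_add_left (ha i) 2).trans_lt (by linarith)
      · exact (add_le_add_left (hb i) (α : R)).trans_lt (by linarith)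
    · rintro (i | i)
      · exact hbw_a i
      · exact (hbw_b i).trans_eq (by simp only [Sum.elim_inr]; ring)
  exact ⟨fun i => congrFun key (.inr i), fun i => congrFun key (.inl i)⟩

end LinearOrderedRing

/-- Extended Bandwidth Lemma. -/
theorem extended_bandwidth_lemma (α β : ℕ) (hα : 0 < α) (hβ : 4 < β)
    (a : Fin α → ℤ) (b : Fin β → ℤ)
    (hsum : (∑ i, a i) + (∑ i, b i) = (α : ℤ) * β + 2 * α)
    (ha : ∀ i, a i ≤ 3)
    (hb : ∀ i, b i ≤ 2 * (α : ℤ))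
    (hbw_b : ∀ i, b i * ((α : ℤ) * β + 2 * α - b i) ≤ (α : ℤ) * ((α : ℤ) * β + α))
    (hbw_a : ∀ i, a i * ((α : ℤ) * β + 2 * α - a i) ≤ 2 * ((α : ℤ) * β + 2 * α - 2)) :
    (∀ i, b i = (α : ℤ)) ∧ (∀ i, a i = 2) :=
  extended_bandwidth_lemma_general (by lia) (by nlinarith) hsum ha hb hbw_b hbw_a
end
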